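/- Let α_x ≥ 0, α_p > 0 and σ_μ > 1/√(2π), set α = α_x + α_p and α_ψ = α²/(α_x + α_p²·σ_μ²). Then for every x_c ∈ ℝ and every m ∈ ℝ, the equation Φ(√α_ψ·(−x_c/√α + (α_p/α)·θ − (α_p/α)·m)) = θ has exactly one real solution θ*, and θ* ∈ (0,1). -/

import Mathlib

/-- The standard normal cumulative distribution function. -/
noncomputable def stdNormalCDF (x : ℝ) : ℝ :=
  ∫ t in Set.Iic x, (Real.sqrt (2 * Real.pi))⁻¹ * Real.exp (-t ^ 2 / 2)

open MeasureTheory in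
lemma aux_int : Integrable (fun t : ℝ => (Real.sqrt (2 * Real.pi))⁻¹ * Real.exp (-t ^ 2 / 2)) := by
  have h := (integrable_exp_neg_mul_sq (b := 1/2) (by norm_num)).const_mul (Real.sqrt (2 * Real.pi))⁻¹
  refine h.congr (Filter.Eventually.of_forall fun t => ?_)
  simp only
  congr 2
  ring

open MeasureTheory in
lemma aux_total : ∫ t : ℝ, (Real.sqrt (2 * Real.pi))⁻¹ * Real.exp (-t ^ 2 / 2) = 1 := by
  have h := integral_gaussian (1/2)
  have e : ∀ t : ℝ, Real.exp (-t ^ 2 / 2) = Real.exp (-(1/2) * t ^ 2) := fun t => by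
    congr 1
    ring
  simp_rw [e]
  rw [integral_const_mul, h, show Real.pi / (1/2) = 2 * Real.pi by ring]
  exact inv_mul_cancel₀ (by positivity)

open MeasureTheory in
lemma aux_pos (s : Set ℝ) (hs : volume s ≠ 0) :
    0 < ∫ t in s, (Real.sqrt (2 * Real.pi))⁻¹ * Real.exp (-t ^ 2 / 2) := by
  rw [integral_pos_iff_support_of_nonneg (fun t => by positivity) aux_int.integrableOn]
  have : Function.support (fun t : ℝ => (Real.sqrt (2 * Real.pi))⁻¹ * Real.exp (-t ^ 2 / 2))
      = Set.univ := by
    ext t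
    simp only [Function.mem_support, Set.mem_univ, iff_true]
    positivity
  rw [this]
  simpa [pos_iff_ne_zero] using hs

lemma cdf_pos' (x : ℝ) : 0 < stdNormalCDF x := aux_pos _ (by simp)

open MeasureTheory in
lemma cdf_lt' (x : ℝ) : stdNormalCDF x < 1 := by
  have h := integral_add_compl (s := Set.Iic x) measurableSet_Iic aux_int
  rw [aux_total] at h
  have := aux_pos (Set.Iic x)ᶜ (by simp)
  unfold stdNormalCDF
  linarith

open MeasureTheory in
lemma cdf_lip (x y : ℝ) :
    |stdNormalCDF y - stdNormalCDF x| ≤ (Real.sqrt (2 * Real.pi))⁻¹ * |y - x| := by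
  unfold stdNormalCDF
  rw [intervalIntegral.integral_Iic_sub_Iic aux_int.integrableOn aux_int.integrableOn]
  rw [← Real.norm_eq_abs]
  apply intervalIntegral.norm_integral_le_of_norm_le_const
  intro t _
  rw [Real.norm_of_nonneg (by positivity)]
  apply mul_le_of_le_one_right (by positivity)
  rw [Real.exp_le_one_iff]
  nlinarith [sq_nonneg t]

lemma aux_main (a k : ℝ) (hk : 0 ≤ k) (hk2 : k < Real.sqrt (2 * Real.pi)) :
    ∃ θ ∈ Set.Ioo (0 : ℝ) 1, stdNormalCDF (a + k * θ) = θ ∧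
      ∀ θ' : ℝ, stdNormalCDF (a + k * θ') = θ' → θ' = θ := by
  have hc : Continuous stdNormalCDF := by
    have : LipschitzWith (Real.toNNReal (Real.sqrt (2 * Real.pi))⁻¹) stdNormalCDF := by
      apply LipschitzWith.of_dist_le_mul
      intro x y
      rw [Real.dist_eq, Real.dist_eq, Real.coe_toNNReal _ (by positivity)]
      exact cdf_lip y x
    exact this.continuous
  have hg : ContinuousOn (fun θ => θ - stdNormalCDF (a + k * θ)) (Set.Icc 0 1) := by
    apply Continuous.continuousOn
    fun_prop
  obtain ⟨θ, -, h⟩ := intermediate_value_Icc (zero_le_one) hg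
    (show (0:ℝ) ∈ Set.Icc _ _ from
      ⟨by have := cdf_pos' (a + k * 0); linarith,
       by have := cdf_lt' (a + k * 1); linarith⟩)
  have h' : stdNormalCDF (a + k * θ) = θ := by
    simp only at h
    linarith
  refine ⟨θ, ⟨h' ▸ cdf_pos' _, h' ▸ cdf_lt' _⟩, h', fun θ' e => ?_⟩
  by_contra hne
  have hp : 0 < |θ' - θ| := abs_pos.mpr (sub_ne_zero.mpr hne)
  have hl := cdf_lip (a + k * θ) (a + k * θ')
  rw [h', e, show a + k * θ' - (a + k * θ) = k * (θ' - θ) by ring, abs_mul, abs_of_nonneg hk,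
    ← mul_assoc] at hl
  have hs : 0 < Real.sqrt (2 * Real.pi) := by positivity
  have : (Real.sqrt (2 * Real.pi))⁻¹ * k < 1 := by
    rw [inv_mul_lt_iff₀ hs]
    linarith
  nlinarith

theorem stmt_4 (αx αp σμ : ℝ) (hαx : 0 ≤ αx) (hαp : 0 < αp)
    (hσμ : σμ > 1 / Real.sqrt (2 * Real.pi))
    (α αψ : ℝ) (hα : α = αx + αp) (hαψ : αψ = α ^ 2 / (αx + αp ^ 2 * σμ ^ 2)) :
    ∀ xc m : ℝ,
      ∃ θ ∈ Set.Ioo (0 : ℝ) 1,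
        stdNormalCDF (Real.sqrt αψ *
          (-xc / Real.sqrt α + (αp / α) * θ - (αp / α) * m)) = θ ∧
        ∀ θ' : ℝ,
          stdNormalCDF (Real.sqrt αψ *
            (-xc / Real.sqrt α + (αp / α) * θ' - (αp / α) * m)) = θ' → θ' = θ := by
  intro xc m
  have hs : 0 < Real.sqrt (2 * Real.pi) := by positivity
  have hσ : 0 < σμ := lt_trans (by positivity) hσμ
  have hαpos : 0 < α := by linarith
  have hk : Real.sqrt αψ * (αp / α) < Real.sqrt (2 * Real.pi) := by
    have h1 : Real.sqrt αψ ≤ α / (αp * σμ) := by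
      apply Real.sqrt_le_iff.mpr
      refine ⟨by positivity, ?_⟩
      rw [hαψ, div_pow, mul_pow]
      apply div_le_div_of_nonneg_left (by positivity) (by positivity)
      linarith
    calc Real.sqrt αψ * (αp / α) ≤ α / (αp * σμ) * (αp / α) := by gcongr
      _ = 1 / σμ := by field_simp
      _ < _ := by
        rw [gt_iff_lt, div_lt_iff₀ hs] at hσμ
        rw [div_lt_iff₀ hσ]
        linarith
  have := aux_main (Real.sqrt αψ * (-xc / Real.sqrt α - (αp / α) * m)) _ (by positivity) hk
  have e : ∀ θ : ℝ, Real.sqrt αψ * (-xc / Real.sqrt α + (αp / α) * θ - (αp / α) * m)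
      = Real.sqrt αψ * (-xc / Real.sqrt α - (αp / α) * m) + Real.sqrt αψ * (αp / α) * θ :=
    fun θ => by ring
  simp_rw [e]
  exact this
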